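/- (Trichotomy) For any ordinal α and any worms A and B all of whose entries are at least α, exactly at least one of the following holds: A <_α B, or A ≡_WC B, or B <_α A. -/

import Mathlib

/-!
The proof is by strong induction on the total length of `A` and `B`, for all `α` at once.

Since `B ⊢ μ :: A` weakens to `B ⊢ α :: A` for `α ≤ μ`, it suffices to treat the case where `α` is
the least entry `μ` occurring in `A` or `B`. Then each worm splits as `h ++ r`, where the head `h`
has entries `> μ` and the remainder `r` is empty or `μ :: b`, and at least one of the remainders is
nonempty (`worm_split`). Comparing `A` with the body `b` of `B` at `μ` either yields `A <_μ B`
outright or gives `A ⊢ μ :: b`, so `A` derives the remainder of `B`; and symmetrically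
(`WCDer.lt_or_rem`). In the remaining case each worm derives the remainder of the other, and the
comparison of the heads at `μ + 1`, which are jointly shorter, lifts to `A` and `B` because rule R3
glues a derived head onto a derived remainder (`WCDer.glue`).
-/

/-- A worm is a finite list of ordinals; `[]` is ⊤. -/
abbrev Worm : Type _ := List Ordinal

/-- Formulas of the closed Reflection Calculus RC⁰. -/
inductive RCFormula : Type _ where
  | top : RCFormula
  | and : RCFormula → RCFormula → RCFormula
  | dia : Ordinal → RCFormula → RCFormula

/-- The RC⁰ formula corresponding to a worm. -/
def Worm.toRC : Worm → RCFormula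
  | [] => .top
  | α :: A => .dia α (Worm.toRC A)

/-- Derivability in the closed Reflection Calculus RC⁰. -/
inductive RCDer : RCFormula → RCFormula → Prop where
  | refl (φ) : RCDer φ φ
  | top (φ) : RCDer φ .top
  | andL (φ ψ) : RCDer (.and φ ψ) φ
  | andR (φ ψ) : RCDer (.and φ ψ) ψ
  | trans_ax (α φ) : RCDer (.dia α (.dia α φ)) (.dia α φ)
  | mono_ax {α β : Ordinal} (φ) : β < α → RCDer (.dia α φ) (.dia β φ)
  | ax5 {α β : Ordinal} (φ ψ) : β < α →
      RCDer (.and (.dia α φ) (.dia β ψ)) (.dia α (.and φ (.dia β ψ)))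
  | cut {φ ψ χ} : RCDer φ ψ → RCDer ψ χ → RCDer φ χ
  | andI {φ ψ χ} : RCDer φ ψ → RCDer φ χ → RCDer φ (.and ψ χ)
  | nec {φ ψ} (α) : RCDer φ ψ → RCDer (.dia α φ) (.dia α ψ)

/-- Derivability in the Worm Calculus WC. -/
inductive WCDer : Worm → Worm → Prop where
  | top (A) : WCDer A []
  | trans_ax (α A) : WCDer (α :: α :: A) (α :: A)
  | mono_ax {α β : Ordinal} (A) : β < α → WCDer (α :: A) (β :: A)
  | cut {A B C} : WCDer A B → WCDer B C → WCDer A C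
  | nec {A B} (α) : WCDer A B → WCDer (α :: A) (α :: B)
  | rule3 {A B C} (α) : WCDer A B → WCDer A (α :: C) →
      (∀ β ∈ B, α + 1 ≤ β) → WCDer A (B ++ α :: C)

open Classical in
/-- The α-head of a worm: its longest initial segment with all entries ≥ α. -/
noncomputable def wormHead (α : Ordinal) (A : Worm) : Worm :=
  A.takeWhile (fun β => decide (α ≤ β))

open Classical in
/-- The α-remainder of a worm: what is left after removing the α-head. -/
noncomputable def wormRem (α : Ordinal) (A : Worm) : Worm :=
  A.dropWhile (fun β => decide (α ≤ β))

/-- The α-body of a worm: the tail of its (α+1)-remainder. -/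
noncomputable def wormBody (α : Ordinal) (A : Worm) : Worm :=
  (wormRem (α + 1) A).tail

/-- A Kripke model: a carrier with a relation for each ordinal. -/
structure KripkeModel : Type _ where
  W : Type _
  R : Ordinal → W → W → Prop

/-- Forcing of worms in a Kripke model. -/
def KripkeModel.forces (M : KripkeModel) : M.W → Worm → Prop
  | _, [] => True
  | x, α :: A => ∃ y, M.R α x y ∧ M.forces y A

/-- A Kripke model is Euclidean if `x R_α y` and `x R_β z` with `β < α` imply `y R_β z`. -/
def KripkeModel.Euclidean (M : KripkeModel) : Prop :=
  ∀ ⦃α β : Ordinal⦄, β < α → ∀ ⦃x y z : M.W⦄, M.R α x y → M.R β x z → M.R β y z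

/-- A Kripke model is a universal model for WC if derivability coincides with
semantic consequence on the model. -/
def KripkeModel.UniversalWC (M : KripkeModel) : Prop :=
  ∀ A B : Worm, WCDer A B ↔ ∀ x : M.W, M.forces x A → M.forces x B

theorem WCDer.refl : ∀ A : Worm, WCDer A A
  | [] => .top _
  | a :: A => .nec a (WCDer.refl A)

theorem WCDer.mono_le {a b : Ordinal} (h : b ≤ a) (A : Worm) : WCDer (a :: A) (b :: A) := by
  rcases h.eq_or_lt with rfl | h
  · exact .refl _
  · exact .mono_ax A h

theorem WCDer.append_left : ∀ A C : Worm, WCDer (A ++ C) A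
  | [], _ => .top _
  | a :: A, C => .nec a (WCDer.append_left A C)

/-- A prefix with entries `≥ a` can be dropped in front of `a`: each entry is weakened to `a` and
then absorbed by transitivity. -/
theorem WCDer.append_right {a : Ordinal} {C : Worm} :
    ∀ A : Worm, (∀ b ∈ A, a ≤ b) → WCDer (A ++ a :: C) (a :: C)
  | [], _ => .refl _
  | b :: A, h =>
    ((WCDer.append_right A fun c hc => h c (List.mem_cons_of_mem _ hc)).nec b).cut
      ((WCDer.mono_le (h b List.mem_cons_self) _).cut (.trans_ax a C))

/-- `r` can be the remainder, at level `a`, of a worm with entries `≥ a`: it is empty, or it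
consists of `a` followed by a worm with entries `≥ a`. -/
def IsWormRem (a : Ordinal) (r : Worm) : Prop :=
  r = [] ∨ ∃ b : Worm, r = a :: b ∧ ∀ c ∈ b, a ≤ c

theorem worm_split (a : Ordinal) : ∀ A : Worm, (∀ b ∈ A, a ≤ b) →
    ∃ h r : Worm, A = h ++ r ∧ (∀ b ∈ h, a + 1 ≤ b) ∧ IsWormRem a r
  | [], _ => ⟨[], [], rfl, by simp, .inl rfl⟩
  | b :: A, hA => by
    have hA' : ∀ c ∈ A, a ≤ c := fun c hc => hA c (List.mem_cons_of_mem _ hc)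
    rcases (hA b List.mem_cons_self).eq_or_lt with rfl | hb
    · exact ⟨[], a :: A, rfl, by simp, .inr ⟨A, rfl, hA'⟩⟩
    · obtain ⟨h, r, rfl, hh, hr⟩ := worm_split a A hA'
      refine ⟨b :: h, r, rfl, ?_, hr⟩
      intro c hc
      rcases List.mem_cons.1 hc with rfl | hc
      · exact Order.add_one_le_of_lt hb
      · exact hh c hc

/-- Rule R3, also allowing an empty remainder. -/
theorem WCDer.glue {a : Ordinal} {X h r : Worm} (hh : ∀ b ∈ h, a + 1 ≤ b) (hr : IsWormRem a r)
    (h₁ : WCDer X h) (h₂ : WCDer X r) : WCDer X (h ++ r) := by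
  rcases hr with rfl | ⟨b, rfl, -⟩
  · simpa using h₁
  · exact .rule3 a h₁ h₂ hh

/-- From trichotomy between `A` and the body of `h ++ r`: either `A <_a h ++ r`, or `A` derives
the remainder `r`. -/
theorem WCDer.lt_or_rem {a : Ordinal} {A h r : Worm} (hh : ∀ b ∈ h, a + 1 ≤ b)
    (hr : IsWormRem a r)
    (ih : ∀ b : Worm, r = a :: b → (∀ c ∈ b, a ≤ c) →
      WCDer b (a :: A) ∨ (WCDer A b ∧ WCDer b A) ∨ WCDer A (a :: b)) :
    WCDer (h ++ r) (a :: A) ∨ WCDer A r := by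
  rcases hr with rfl | ⟨b, rfl, hb⟩
  · exact .inr (.top _)
  · have hd : WCDer (h ++ a :: b) (a :: b) :=
      .append_right h fun c hc => le_self_add.trans (hh c hc)
    rcases ih b rfl hb with h1 | ⟨-, h1⟩ | h1
    · exact .inl (hd.cut ((h1.nec a).cut (.trans_ax a A)))
    · exact .inl (hd.cut (h1.nec a))
    · exact .inr h1

theorem WCDer.lt_of_head_lt {a : Ordinal} {X Y h r : Worm} (hh : ∀ b ∈ h, a + 1 ≤ b)
    (hr : IsWormRem a r) (hX : WCDer X Y) (h₁ : WCDer Y ((a + 1) :: h)) (h₂ : WCDer X r) :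
    WCDer X (a :: (h ++ r)) := by
  have hh' : ∀ b ∈ (a + 1) :: h, a + 1 ≤ b := by
    intro b hb
    rcases List.mem_cons.1 hb with rfl | hb
    · exact le_rfl
    · exact hh b hb
  exact (WCDer.glue hh' hr (hX.cut h₁) h₂).cut (.mono_le le_self_add _)

theorem trichotomy_aux (n : ℕ) : ∀ (α : Ordinal) (A B : Worm), A.length + B.length = n →
    (∀ β ∈ A, α ≤ β) → (∀ β ∈ B, α ≤ β) →
    WCDer B (α :: A) ∨ (WCDer A B ∧ WCDer B A) ∨ WCDer A (α :: B) := by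
  induction n using Nat.strong_induction_on with
  | _ n ih =>
    intro α A B hn hA hB
    by_cases hne : A ++ B = []
    · obtain ⟨rfl, rfl⟩ := List.append_eq_nil_iff.1 hne
      exact .inr (.inl ⟨.top _, .top _⟩)
    obtain ⟨μ, hμ, hmin⟩ := WellFounded.has_min (wellFounded_lt (α := Ordinal))
      {β | β ∈ A ++ B} (List.exists_mem_of_ne_nil _ hne)
    simp only [Set.mem_ofPred_eq] at hμ hmin
    have hαμ : α ≤ μ := (List.mem_append.1 hμ).elim (hA μ) (hB μ)
    -- Trichotomy at the least entry `μ` suffices, by monotonicity.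
    suffices h : WCDer B (μ :: A) ∨ (WCDer A B ∧ WCDer B A) ∨ WCDer A (μ :: B) by
      rcases h with h | h | h
      · exact .inl (h.cut (.mono_le hαμ _))
      · exact .inr (.inl h)
      · exact .inr (.inr (h.cut (.mono_le hαμ _)))
    have hAmin : ∀ β ∈ A, μ ≤ β := fun β hβ => not_lt.1 (hmin β (List.mem_append_left _ hβ))
    have hBmin : ∀ β ∈ B, μ ≤ β := fun β hβ => not_lt.1 (hmin β (List.mem_append_right _ hβ))
    obtain ⟨h₁, r₁, rfl, hh₁, hr₁⟩ := worm_split μ A hAmin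
    obtain ⟨h₂, r₂, rfl, hh₂, hr₂⟩ := worm_split μ B hBmin
    -- As `μ` occurs and the heads avoid it, some remainder is nonempty.
    have hlen : h₁.length + h₂.length < n := by
      have hnot : ∀ h : Worm, (∀ b ∈ h, μ + 1 ≤ b) → μ ∉ h := fun h hh hm =>
        (Order.lt_add_one_iff.2 le_rfl).not_ge (hh μ hm)
      have hpos : 0 < r₁.length + r₂.length := by
        have := hnot h₁ hh₁
        have := hnot h₂ hh₂
        have : μ ∈ r₁ ∨ μ ∈ r₂ := by
          simp only [List.mem_append] at hμ
          tauto
        rcases this with h | h <;> have := List.length_pos_of_mem h <;> omega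
      simp only [List.length_append] at hn
      omega
    rcases WCDer.lt_or_rem (A := h₁ ++ r₁) hh₂ hr₂ (fun b hb hb' =>
      ih _ (by rw [← hn, hb]; simp; omega) μ (h₁ ++ r₁) b rfl hAmin hb') with h | hAr
    · exact .inl h
    rcases WCDer.lt_or_rem (A := h₂ ++ r₂) hh₁ hr₁ (fun b hb hb' =>
      ih _ (by rw [← hn, hb]; simp; omega) μ (h₂ ++ r₂) b rfl hBmin hb') with h | hBr
    · exact .inr (.inr h)
    have dA : WCDer (h₁ ++ r₁) h₁ := .append_left _ _
    have dB : WCDer (h₂ ++ r₂) h₂ := .append_left _ _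
    rcases ih _ hlen (μ + 1) h₁ h₂ rfl hh₁ hh₂ with h | ⟨h, h'⟩ | h
    · exact .inl (.lt_of_head_lt hh₁ hr₁ dB h hBr)
    · exact .inr (.inl ⟨.glue hh₂ hr₂ (dA.cut h) hAr, .glue hh₁ hr₁ (dB.cut h') hBr⟩)
    · exact .inr (.inr (.lt_of_head_lt hh₂ hr₂ dA h hAr))

theorem trichotomy (α : Ordinal) (A B : Worm)
    (hA : ∀ β ∈ A, α ≤ β) (hB : ∀ β ∈ B, α ≤ β) :
    WCDer B (α :: A) ∨ (WCDer A B ∧ WCDer B A) ∨ WCDer A (α :: B) :=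
  trichotomy_aux _ α A B rfl hA hB
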